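/- arXiv:math/0201003 — 4 statements merged into one kernel-verified Lean document; each statement's English description precedes it below -/
import Mathlib

section
/- Let k ≥ 2 be an integer and λ a partition. Then λ has empty k-core if and only if, for each i ∈ {1,…,k}, the intrinsic median of the i-th subsequence (mod k) of s(λ) coincides with the median of s(λ) (where the i-th subsequence consists of every k-th digit of s(λ), including the i-th digit after the median of s(λ), and inherits gaps between its digits from s(λ)). -/
open scoped BigOperators

namespace RimHookPaper

/-- A partition: a weakly decreasing, eventually-zero sequence of naturals;
`parts n` is the `(n+1)`-st part. -/
structure Partition : Type where
  parts : ℕ → ℕ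
  antitone : ∀ ⦃i j : ℕ⦄, i ≤ j → parts j ≤ parts i
  eventually_zero : ∃ N : ℕ, ∀ i : ℕ, N ≤ i → parts i = 0

namespace Partition

/-- The size `|λ|` of a partition. -/
noncomputable def size (P : Partition) : ℕ := ∑ᶠ i, P.parts i

/-- The empty partition. -/
def empty : Partition := ⟨fun _ => 0, fun _ _ _ => le_rfl, ⟨0, fun _ _ => rfl⟩⟩

/-- The number of nonzero parts of a partition. -/
noncomputable def length (P : Partition) : ℕ := sInf {N | P.parts N = 0}

/-- The cells of the Young diagram of a partition. -/
def cells (P : Partition) : Set (ℕ × ℕ) := {c | c.2 < P.parts c.1}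

instance : LE Partition := ⟨fun Q P => ∀ i, Q.parts i ≤ P.parts i⟩

/-- The skew shape `P / Q` (as a set of cells). -/
def skew (P Q : Partition) : Set (ℕ × ℕ) := P.cells \ Q.cells

end Partition

/-- Edge-adjacency of cells. -/
def Adj (c d : ℕ × ℕ) : Prop :=
  (c.1 = d.1 ∧ (c.2 + 1 = d.2 ∨ d.2 + 1 = c.2)) ∨
    (c.2 = d.2 ∧ (c.1 + 1 = d.1 ∨ d.1 + 1 = c.1))

/-- A set of cells is (edge-)connected. -/
def IsConnectedSet (S : Set (ℕ × ℕ)) : Prop :=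
  ∀ c ∈ S, ∀ d ∈ S, Relation.ReflTransGen (fun x y => x ∈ S ∧ y ∈ S ∧ Adj x y) c d

/-- `S` contains no 2×2 square. -/
def NoSquare (S : Set (ℕ × ℕ)) : Prop :=
  ¬ ∃ i j : ℕ, (i, j) ∈ S ∧ (i + 1, j) ∈ S ∧ (i, j + 1) ∈ S ∧ (i + 1, j + 1) ∈ S

/-- `P / Q` is a rim hook (border strip) of length `t`: a nonempty connected skew
shape with no 2×2 square, consisting of `t` boxes. -/
def IsRimHook (P Q : Partition) (t : ℕ) : Prop :=
  Q ≤ P ∧ (P.skew Q).Nonempty ∧ IsConnectedSet (P.skew Q) ∧ NoSquare (P.skew Q) ∧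
    (P.skew Q).ncard = t

/-- One step of a rim hook tableau: an empty hook (`t = 0`) or a rim hook of length `t`. -/
def IsStep (P Q : Partition) (t : ℕ) : Prop :=
  (t = 0 ∧ P = Q) ∨ (0 < t ∧ IsRimHook P Q t)

/-- Number of rows met by a set of cells. -/
noncomputable def rowCount (S : Set (ℕ × ℕ)) : ℕ := (Prod.fst '' S).ncard

/-- A rim hook tableau of shape `P` and type `μ`: a chain
`∅ = λ⁰ ⊆ λ¹ ⊆ ⋯ ⊆ λʳ = P` with each `λⁱ/λⁱ⁻¹` a (possibly empty)
rim hook of length `μᵢ`. -/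
structure RHT (P : Partition) (μ : List ℕ) : Type where
  chain : Fin (μ.length + 1) → Partition
  chain_zero : chain 0 = Partition.empty
  chain_last : chain (Fin.last μ.length) = P
  step : ∀ j : Fin μ.length, IsStep (chain j.succ) (chain j.castSucc) (μ.get j)

/-- The total height of a rim hook tableau: the sum of the heights
(number of rows minus one) of its nonempty rim hooks. -/
noncomputable def RHT.height {P : Partition} {μ : List ℕ} (T : RHT P μ) : ℕ :=
  ∑ j : Fin μ.length, (rowCount ((T.chain j.succ).skew (T.chain j.castSucc)) - 1)

/-- The character value `χ^λ_μ` of the symmetric group, via the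
Murnaghan–Nakayama rule. -/
noncomputable def chiAux (P : Partition) (μ : List ℕ) : ℤ :=
  ∑ᶠ T : RHT P μ, (-1 : ℤ) ^ T.height

/-- The parts of a multiset, listed in weakly decreasing order. -/
def typeList (μ : Multiset ℕ) : List ℕ := (μ.sort (· ≤ ·)).reverse

/-- `χ^λ_μ` for a multiset type `μ`. -/
noncomputable def chi (P : Partition) (μ : Multiset ℕ) : ℤ := chiAux P (typeList μ)

/-- `z_μ = ∏_j m_j! · j^{m_j}` where `μ` has `m_j` parts equal to `j`. -/
def zpart (μ : Multiset ℕ) : ℕ := μ.prod * ∏ j ∈ μ.toFinset, (μ.count j).factorial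

/-- `χ^λ(σ)`: the character evaluated at a permutation, via its full cycle type
(including fixed points as parts equal to 1). -/
noncomputable def chiPerm (P : Partition) {m : ℕ} (σ : Equiv.Perm (Fin m)) : ℤ :=
  chi P (σ.cycleType + Multiset.replicate (m - σ.cycleType.sum) 1)

/-- Position of the zero (up step) corresponding to row `n` in the 0/1 sequence
`s(P)`, where the median of `s(P)` is the gap just below position `0`. -/
def zpos (P : Partition) (n : ℕ) : ℤ := (P.parts n : ℤ) - (n : ℤ) - 1

/-- `s(P)` has a `0` (an up step) at position `x`; otherwise it has a `1`. -/
def isZeroAt (P : Partition) (x : ℤ) : Prop := ∃ n : ℕ, zpos P n = x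

/-- `Q` is the `k`-quotient of `P`: for each residue `i`, the 0/1 sequence of `Q i`
is (up to the shift `d` recording the position of its median) the subsequence of
`s(P)` consisting of every `k`-th digit, including the `(i+1)`-st digit after the
median of `s(P)`. -/
def IsKQuotient (k : ℕ) (P : Partition) (Q : Fin k → Partition) : Prop :=
  ∀ i : Fin k, ∃ d : ℤ, ∀ j : ℤ,
    isZeroAt (Q i) j ↔ isZeroAt P (((i : ℕ) : ℤ) + (j + d) * (k : ℤ))

/-- `C` is the `k`-core of `P`: it is obtained from `P` by successively removing
rim hooks of length `k`, as long as possible. -/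
def IsKCore (k : ℕ) (P C : Partition) : Prop :=
  Relation.ReflTransGen (fun A B => IsRimHook A B k) P C ∧ ¬ ∃ C', IsRimHook C C' k

/-- The map on row indices induced by moving the zero in row `m` down (left)
to row `m'`, the zeros in rows `m+1,…,m'` each moving up one row. -/
def cycleFun (m m' n : ℕ) : ℕ :=
  if n = m then m' else if m < n ∧ n ≤ m' then n - 1 else n

/-- One tracking step for the zero permutation: passing from `A` to `B` by removing
a rim hook, encoded on the 0/1 sequence as interchanging a `1` with a later `0`
(the moved zero, in row `m` of `A`, jumps over `m' - m` zeros, landing in row `m'`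
of `B`); the row of each labeled zero is updated by `cycleFun m m'`. -/
def StepTrack (A B : Partition) (f g : ℕ → ℕ) : Prop :=
  (A = B ∧ g = f) ∨
    ∃ m m' : ℕ, m ≤ m' ∧
      (∀ n, n < m → zpos B n = zpos A n) ∧
      (∀ n, m ≤ n → n < m' → zpos B n = zpos A (n + 1)) ∧
      (∀ n, m' < n → zpos B n = zpos A n) ∧
      g = fun i => cycleFun m m' (f i)

/-- `π` is the zero permutation of the rim hook tableau `T`: label the zeros of
`s(P)` succeeding the first one by `1,…,ℓ(P)` from left to right (`q j i` is the
row of label `i+1` at stage `j` of the peeling, rows counted from the top), peel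
the rim hooks of `T` in order of decreasing entries, and read off the labels in
the final sequence `s(∅)` from left to right. -/
def IsZeroPerm {P : Partition} {μ : List ℕ} (T : RHT P μ)
    (π : Equiv.Perm (Fin P.length)) : Prop :=
  ∃ q : Fin (μ.length + 1) → ℕ → ℕ,
    (∀ i : ℕ, i < P.length → q (Fin.last μ.length) i = P.length - 1 - i) ∧
    (∀ j : Fin μ.length,
      StepTrack (T.chain j.succ) (T.chain j.castSucc) (q j.succ) (q j.castSucc)) ∧
    (∀ i : Fin P.length, q 0 ((π i : ℕ)) = P.length - 1 - (i : ℕ))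

/-- `ω(T) = (T₁,…,T_k)`: the rim hook tableau `T` (all of whose hook lengths are
divisible by `k`) decomposes into the `k`-tuple of rim hook tableaux `Ti` on the
`k`-quotient: each step of `T`, removing a hook of length `k·t`, affects exactly
one subsequence (mod `k`) of the 0/1 sequence, i.e. removes a hook of length `t`
from exactly one of the quotient partitions. -/
def OmegaRel (k : ℕ) {P : Partition} {κ : List ℕ} (T : RHT P κ)
    {Q : Fin k → Partition} {ν : Fin k → List ℕ}
    (Ti : ∀ i : Fin k, RHT (Q i) (ν i)) : Prop :=
  ∃ (QC : Fin (κ.length + 1) → Fin k → Partition) (a : Fin κ.length → Fin k),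
    (∀ j, IsKQuotient k (T.chain j) (QC j)) ∧
    (∀ j : Fin κ.length, ∀ i, i ≠ a j → QC j.castSucc i = QC j.succ i) ∧
    (∀ j : Fin κ.length, ∃ t : ℕ, κ.get j = k * t ∧
      IsStep (QC j.succ (a j)) (QC j.castSucc (a j)) t) ∧
    (∀ i : Fin k, ∃ e : Fin (ν i).length → Fin κ.length,
      StrictMono e ∧ (∀ s, a (e s) = i) ∧ (∀ j, a j = i → ∃ s, e s = j) ∧
      (∀ s, k * (ν i).get s = κ.get (e s)) ∧
      (Ti i).chain 0 = QC 0 i ∧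
      (∀ s : Fin (ν i).length, (Ti i).chain s.succ = QC (Fin.succ (e s)) i))


def Mv (A B : Partition) (m m' : ℕ) : Prop :=
  m ≤ m' ∧ (∀ n, n < m ∨ m' < n → B.parts n = A.parts n) ∧
  (∀ n, m ≤ n → n < m' → B.parts n + 1 = A.parts (n + 1)) ∧ B.parts m' < A.parts m'

theorem Mv.lt {A B : Partition} {m m' : ℕ} (h : Mv A B m m') (n : ℕ) (h1 : m ≤ n) (h2 : n ≤ m') :
    B.parts n < A.parts n := by
  obtain ⟨h0, ho, hi, hl⟩ := h
  rcases Nat.lt_or_ge n m' with h3 | h3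
  · have := hi n h1 h3
    have := A.antitone (Nat.le_succ n)
    simp only [Nat.succ_eq_add_one] at this
    omega
  · have : n = m' := by omega
    subst this; exact hl

theorem Mv.mem {A B : Partition} {m m' : ℕ} (h : Mv A B m m') (n c : ℕ) :
    (n, c) ∈ A.skew B ↔ m ≤ n ∧ n ≤ m' ∧ B.parts n ≤ c ∧ c < A.parts n := by
  simp only [Partition.skew, Partition.cells, Set.mem_sdiff, Set.mem_ofPred_eq, not_lt]
  constructor
  · rintro ⟨h1, h2⟩
    by_contra hc
    have := h.2.1 n (by omega)
    omega
  · tauto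

theorem Mv.sum {A B : Partition} {m m' : ℕ} (h : Mv A B m m') :
    ∀ r, m ≤ r → r ≤ m' →
      (∑ n ∈ Finset.Ico m (r + 1), (A.parts n - B.parts n)) + B.parts r + m = A.parts m + r := by
  intro r hr
  induction r, hr using Nat.le_induction with
  | base =>
    intro h2
    have := h.lt m le_rfl h2
    simp
    omega
  | succ r hr ih =>
    intro h2
    have h3 := ih (by omega)
    have h4 := h.lt (r+1) (by omega) h2
    have h5 := h.2.2.1 r hr (by omega)
    rw [Finset.sum_Ico_succ_top (by omega)]
    omega

theorem Mv.ncard {A B : Partition} {m m' : ℕ} (h : Mv A B m m') :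
    (A.skew B).ncard + B.parts m' + m = A.parts m + m' := by
  rw [← h.sum m' h.1 le_rfl]
  have : A.skew B = (((Finset.Ico m (m'+1)).sigma fun n => Finset.Ico (B.parts n) (A.parts n)).image
      (fun p : (_ : ℕ) × ℕ => (p.1, p.2)) : Finset (ℕ × ℕ)) := by
    ext ⟨n, c⟩
    rw [h.mem]
    simp only [Finset.coe_image, Set.mem_image, Finset.mem_coe, Finset.mem_sigma, Finset.mem_Ico]
    constructor
    · rintro ⟨h1, h2, h3, h4⟩
      exact ⟨⟨n, c⟩, ⟨⟨h1, Nat.lt_succ_of_le h2⟩, h3, h4⟩, rfl⟩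
    · rintro ⟨⟨n', c'⟩, ⟨⟨h1, h2⟩, h3, h4⟩, h5⟩
      simp only [Prod.mk.injEq] at h5
      obtain ⟨rfl, rfl⟩ := h5
      exact ⟨h1, Nat.le_of_lt_succ h2, h3, h4⟩
  rw [this, Set.ncard_coe_finset, Finset.card_image_of_injective, Finset.card_sigma]
  · simp
  · rintro ⟨a, b⟩ ⟨c, d⟩ h
    simp only [Prod.mk.injEq] at h
    obtain ⟨rfl, rfl⟩ := h
    rfl

theorem zpos_lt (A : Partition) {i j : ℕ} (h : i < j) : zpos A j < zpos A i := by
  have := A.antitone h.le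
  unfold zpos; omega

theorem cross {S : Set (ℕ × ℕ)} (hS : IsConnectedSet S) (r : ℕ) {c d : ℕ × ℕ} (hc : c ∈ S)
    (hd : d ∈ S) (h1 : c.1 ≤ r) (h2 : r < d.1) : ∃ j, (r, j) ∈ S ∧ (r + 1, j) ∈ S := by
  by_contra hne
  have key : d.1 ≤ r := by
    have := hS c hc d hd
    clear hd h2
    induction this with
    | refl => exact h1
    | tail _ hxy ih =>
      obtain ⟨hx, hy, ha⟩ := hxy
      rename_i x y _
      by_contra hlt
      apply hne
      obtain ⟨x1, x2⟩ := x
      obtain ⟨y1, y2⟩ := y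
      simp only [Adj] at *
      have e1 : x1 = r := by omega
      have e2 : y1 = r + 1 := by omega
      have e3 : y2 = x2 := by omega
      subst e1 e2 e3
      exact ⟨_, hx, hy⟩
  omega

theorem skew_finite_rows (A B : Partition) : ∃ N, ∀ c ∈ A.skew B, c.1 < N := by
  obtain ⟨N, hN⟩ := A.eventually_zero
  refine ⟨N, ?_⟩
  rintro ⟨n, c⟩ ⟨h, _⟩
  by_contra hc
  have := hN n (by simpa using hc)
  simp [Partition.cells] at h
  omega

theorem IsRimHook.mv {A B : Partition} {k : ℕ} (h : IsRimHook A B k) :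
    ∃ m m', Mv A B m m' := by
  obtain ⟨hle, ⟨c0, hc0⟩, hconn, hsq, -⟩ := h
  have hle' : ∀ i, B.parts i ≤ A.parts i := hle
  obtain ⟨N, hN⟩ := skew_finite_rows A B
  have memrow : ∀ n, (∃ c, (n, c) ∈ A.skew B) ↔ B.parts n < A.parts n := by
    intro n
    simp only [Partition.skew, Partition.cells, Set.mem_sdiff, Set.mem_ofPred_eq, not_lt]
    constructor
    · rintro ⟨c, h1, h2⟩; omega
    · intro h; exact ⟨B.parts n, h, le_rfl⟩
  let R := (Finset.range N).filter (fun n => B.parts n < A.parts n)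
  have hR : ∀ n, n ∈ R ↔ B.parts n < A.parts n := by
    intro n
    simp only [R, Finset.mem_filter, Finset.mem_range, and_iff_right_iff_imp]
    intro h
    obtain ⟨c, hc⟩ := (memrow n).2 h
    exact hN _ hc
  have hne : R.Nonempty := ⟨c0.1, (hR _).2 ((memrow _).1 ⟨c0.2, hc0⟩)⟩
  refine ⟨R.min' hne, R.max' hne, R.min'_le_max' hne, ?_, ?_, (hR _).1 (R.max'_mem hne)⟩
  · intro n hn
    have : n ∉ R := by
      intro hmem
      have := R.min'_le n hmem
      have := R.le_max' n hmem
      omega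
    rw [hR] at this
    have := hle' n
    omega
  · intro n h1 h2
    obtain ⟨c, hc⟩ := (memrow _).2 ((hR _).1 (R.min'_mem hne))
    obtain ⟨d, hd⟩ := (memrow _).2 ((hR _).1 (R.max'_mem hne))
    obtain ⟨j, hj1, hj2⟩ := cross hconn n hc hd h1 h2
    have a1 := A.antitone (Nat.le_succ n)
    have b1 := B.antitone (Nat.le_succ n)
    simp only [Nat.succ_eq_add_one] at a1 b1
    simp only [Partition.skew, Partition.cells, Set.mem_sdiff, Set.mem_ofPred_eq, not_lt] at hj1 hj2
    by_contra hcon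
    apply hsq
    refine ⟨n, B.parts n, ?_⟩
    simp only [Partition.skew, Partition.cells, Set.mem_sdiff, Set.mem_ofPred_eq, not_lt]
    omega

theorem Mv.rimHook {A B : Partition} {m m' k : ℕ} (h : Mv A B m m')
    (hk : B.parts m' + k + m = A.parts m + m') : IsRimHook A B k := by
  have hlast : (m', B.parts m') ∈ A.skew B := by
    rw [h.mem]
    exact ⟨h.1, le_rfl, le_rfl, h.2.2.2⟩
  refine ⟨?_, ⟨_, hlast⟩, ?_, ?_, ?_⟩
  · intro n
    by_cases hn : n < m ∨ m' < n
    · exact (h.2.1 n hn).le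
    · exact (h.lt n (by omega) (by omega)).le
  · have key : ∀ t n c, (m' - n) + c = t → (n, c) ∈ A.skew B →
        Relation.ReflTransGen (fun x y => x ∈ A.skew B ∧ y ∈ A.skew B ∧ Adj x y)
          (n, c) (m', B.parts m') := by
      intro t
      induction t using Nat.strong_induction_on with
      | _ t ih =>
        intro n c ht hmem
        have hm := (h.mem n c).1 hmem
        rcases Nat.lt_or_ge (B.parts n) c with hc | hc
        · have h2 : (n, c - 1) ∈ A.skew B := by rw [h.mem]; omega
          refine Relation.ReflTransGen.head ⟨hmem, h2, ?_⟩ (ih (m' - n + (c - 1)) (by omega) n (c-1) rfl h2)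
          exact Or.inl ⟨rfl, Or.inr (Nat.sub_add_cancel (by omega))⟩
        · rcases Nat.lt_or_ge n m' with hn | hn
          · have h5 := h.2.2.1 n hm.1 hn
            have b1 := B.antitone (Nat.le_succ n)
            simp only [Nat.succ_eq_add_one] at b1
            have h2 : (n + 1, c) ∈ A.skew B := by rw [h.mem]; omega
            refine Relation.ReflTransGen.head ⟨hmem, h2, ?_⟩ (ih (m' - (n + 1) + c) (by omega) (n+1) c rfl h2)
            exact Or.inr ⟨rfl, Or.inl rfl⟩
          · have e1 : n = m' := by omega
            subst e1
            have e2 : c = B.parts n := by omega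
            subst e2
            exact Relation.ReflTransGen.refl
    rintro ⟨n, c⟩ hc ⟨n', d⟩ hd
    refine (key _ n c rfl hc).trans ?_
    have h3 := key _ n' d rfl hd
    have hsymm : Std.Symm (fun x y => x ∈ A.skew B ∧ y ∈ A.skew B ∧ Adj x y) := by
      constructor
      rintro x y ⟨h1, h2, h3⟩
      refine ⟨h2, h1, ?_⟩
      simp only [Adj] at *
      omega
    exact Relation.ReflTransGen.stdSymm.symm _ _ h3
  · rintro ⟨n, j, h1, h2, h3, h4⟩
    rw [h.mem] at *
    have := h.2.2.1 n h1.1 (by omega)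
    omega
  · have := h.ncard
    omega

/-- bead move -/
theorem IsRimHook.bead {A B : Partition} {k : ℕ} (h : IsRimHook A B k) :
    ∃ x, isZeroAt A x ∧ ¬ isZeroAt A (x - k) ∧
      ∀ y, isZeroAt B y ↔ (isZeroAt A y ∧ y ≠ x) ∨ y = x - k := by
  obtain ⟨m, m', hm⟩ := h.mv
  have hn := hm.ncard
  rw [h.2.2.2.2] at hn
  have hb : zpos B m' = zpos A m - k := by unfold zpos; omega
  have hmid : ∀ n, m ≤ n → n < m' → zpos B n = zpos A (n + 1) := by
    intro n h1 h2
    have := hm.2.2.1 n h1 h2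
    unfold zpos; push_cast; omega
  have hout : ∀ n, n < m ∨ m' < n → zpos B n = zpos A n := by
    intro n h1
    have := hm.2.1 n h1
    unfold zpos; omega
  have hlt : zpos B m' < zpos A m' := by
    have := hm.2.2.2
    unfold zpos; omega
  refine ⟨zpos A m, ⟨m, rfl⟩, ?_, ?_⟩
  · rw [← hb]
    rintro ⟨n, hn⟩
    rcases lt_trichotomy n m' with h1 | h1 | h1
    · have := zpos_lt A h1; omega
    · subst h1; omega
    · have := zpos_lt B h1
      have := hout n (Or.inr h1); omega
  · intro y
    constructor
    · rintro ⟨n, rfl⟩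
      by_cases h1 : n < m ∨ m' < n
      · left
        rw [hout n h1]
        refine ⟨⟨n, rfl⟩, ?_⟩
        have := hm.1
        rcases lt_or_gt_of_ne (show n ≠ m by omega) with h2 | h2
        · have := zpos_lt A h2; omega
        · have := zpos_lt A h2; omega
      · rcases Nat.lt_or_ge n m' with h2 | h2
        · left
          rw [hmid n (by omega) h2]
          refine ⟨⟨n+1, rfl⟩, ?_⟩
          have := zpos_lt A (show m < n + 1 by omega)
          omega
        · right
          have : n = m' := by omega
          rw [this, hb]
    · rintro (⟨⟨n, rfl⟩, h1⟩ | rfl)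
      · have h2 : n ≠ m := by rintro rfl; exact h1 rfl
        by_cases h3 : n < m ∨ m' < n
        · exact ⟨n, hout n h3⟩
        · refine ⟨n - 1, ?_⟩
          rw [hmid (n-1) (by omega) (by omega)]
          congr 1; omega
      · exact ⟨m', hb⟩

theorem exists_rimHook {A : Partition} {k : ℕ} (hk : 0 < k) {x : ℤ} (hx : isZeroAt A x)
    (hx' : ¬ isZeroAt A (x - k)) : ∃ B, IsRimHook A B k := by
  obtain ⟨m, rfl⟩ := hx
  have hex : ∃ n, zpos A n < zpos A m - k := by
    refine ⟨A.parts 0 + m + k + 2, ?_⟩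
    have := A.antitone (Nat.zero_le (A.parts 0 + m + k + 2))
    unfold zpos; push_cast; omega
  classical
  obtain ⟨M, hM⟩ : ∃ M, M = Nat.find hex := ⟨_, rfl⟩
  have hM1 : zpos A M < zpos A m - k := hM ▸ Nat.find_spec hex
  have hM2 : ∀ n, n < M → zpos A m - k < zpos A n := by
    intro n hn
    have h1 := Nat.find_min hex (hM ▸ hn)
    have h2 : zpos A n ≠ zpos A m - k := fun h => hx' ⟨n, h⟩
    omega
  have hmM : m < M := by
    by_contra hc
    rcases Nat.lt_or_ge M m with h1 | h1
    · have := zpos_lt A h1; omega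
    · have : M = m := by omega
      subst this; omega
  obtain ⟨m', rfl⟩ : ∃ m', M = m' + 1 := ⟨M - 1, by omega⟩
  have hM3 := hM2 m' (by omega)
  unfold zpos at hM1 hM3
  push_cast at hM1
  have anti : ∀ n, A.parts (n+1) ≤ A.parts n := fun n => A.antitone (Nat.le_succ n)
  have hbig : ∀ n, n ≤ m' → A.parts m' ≤ A.parts n := fun n hn => A.antitone hn
  let f : ℕ → ℕ := fun n => if n < m then A.parts n else if n < m' then A.parts (n+1) - 1
    else if n = m' then A.parts m + m' - m - k else A.parts n
  have hf : ∀ n, f n = if n < m then A.parts n else if n < m' then A.parts (n+1) - 1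
    else if n = m' then A.parts m + m' - m - k else A.parts n := fun n => rfl
  have hfs : ∀ n, f (n+1) ≤ f n := by
    intro n
    have h1 := anti n
    have h2 := anti (n+1)
    rw [hf, hf]
    rcases lt_trichotomy n m' with hc | hc | hc
    · rcases Nat.lt_or_ge (n+1) m' with hd | hd
      · split_ifs <;> omega
      · have : n + 1 = m' := by omega
        have h3 := hbig n (by omega)
        subst this
        by_cases he : n + 1 = m
        · subst he
          split_ifs <;> omega
        · split_ifs <;> omega
    · subst hc
      split_ifs <;> omega
    · split_ifs <;> omega
  let B : Partition := ⟨f, fun i j hij => antitone_nat_of_succ_le hfs hij, by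
    obtain ⟨N, hN⟩ := A.eventually_zero
    refine ⟨N + m' + 1, fun i hi => ?_⟩
    rw [hf, if_neg (by omega), if_neg (by omega), if_neg (by omega)]
    exact hN i (by omega)⟩
  have hB : ∀ n, B.parts n = f n := fun n => rfl
  have hBm : B.parts m' = A.parts m + m' - m - k := by
    rw [hB, hf, if_neg (by omega), if_neg (by omega), if_pos rfl]
  refine ⟨B, Mv.rimHook (m := m) (m' := m') ⟨by omega, ?_, ?_, ?_⟩ ?_⟩
  · intro n hn
    rw [hB, hf]
    split_ifs <;> omega
  · intro n h1 h2
    have := hbig (n+1) (by omega)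
    rw [hB, hf, if_neg (by omega), if_pos h2]
    omega
  · omega
  · omega

/-- Balanced subset of the integers. -/
def Bal (Z : ℤ → Prop) : Prop := {j : ℤ | j < 0 ∧ ¬ Z j}.ncard = {j : ℤ | 0 ≤ j ∧ Z j}.ncard

theorem bal_move (Z Z' : ℤ → Prop) (hf1 : {j : ℤ | j < 0 ∧ ¬ Z j}.Finite)
    (hf2 : {j : ℤ | 0 ≤ j ∧ Z j}.Finite) (a : ℤ) (ha : Z a) (ha' : ¬ Z (a - 1))
    (h : ∀ y, Z' y ↔ (Z y ∧ y ≠ a) ∨ y = a - 1) : Bal Z ↔ Bal Z' := by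
  unfold Bal
  rcases lt_trichotomy a 0 with h0 | h0 | h0
  · have e1 : {j : ℤ | j < 0 ∧ ¬ Z' j} = insert a ({j : ℤ | j < 0 ∧ ¬ Z j} \ {a - 1}) := by
      ext j
      simp only [Set.mem_ofPred_eq, h, Set.mem_insert_iff, Set.mem_sdiff, Set.mem_singleton_iff]
      by_cases h1 : j = a
      · subst h1; simp [h0]; omega
      · simp [h1]; tauto
    have e2 : {j : ℤ | 0 ≤ j ∧ Z' j} = {j : ℤ | 0 ≤ j ∧ Z j} := by
      ext j
      simp only [Set.mem_ofPred_eq, h]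
      have : 0 ≤ j → j ≠ a ∧ j ≠ a - 1 := by omega
      tauto
    rw [e1, e2, Set.ncard_exchange (by simp [ha]) (by simp [ha']; omega)]
  · subst h0
    have e1 : {j : ℤ | j < 0 ∧ ¬ Z j} = insert (-1) {j : ℤ | j < 0 ∧ ¬ Z' j} := by
      ext j
      simp only [Set.mem_ofPred_eq, h, Set.mem_insert_iff]
      by_cases h1 : j = -1
      · subst h1; simpa using ha'
      · have : j < 0 → j ≠ 0 := by omega
        simp [h1]; tauto
    have e2 : {j : ℤ | 0 ≤ j ∧ Z j} = insert 0 {j : ℤ | 0 ≤ j ∧ Z' j} := by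
      ext j
      simp only [Set.mem_ofPred_eq, h, Set.mem_insert_iff]
      by_cases h1 : j = 0
      · subst h1; simpa using ha
      · have : 0 ≤ j → j ≠ -1 := by omega
        simp [h1]; tauto
    have g1 : {j : ℤ | j < 0 ∧ ¬ Z' j}.Finite := hf1.subset (by rw [e1]; exact Set.subset_insert _ _)
    have g2 : {j : ℤ | 0 ≤ j ∧ Z' j}.Finite := hf2.subset (by rw [e2]; exact Set.subset_insert _ _)
    rw [e1, e2, Set.ncard_insert_of_notMem (by simp [h]) g1,
      Set.ncard_insert_of_notMem (by simp [h]) g2]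
    omega
  · have e1 : {j : ℤ | j < 0 ∧ ¬ Z' j} = {j : ℤ | j < 0 ∧ ¬ Z j} := by
      ext j
      simp only [Set.mem_ofPred_eq, h]
      have : j < 0 → j ≠ a ∧ j ≠ a - 1 := by omega
      tauto
    have e2 : {j : ℤ | 0 ≤ j ∧ Z' j} = insert (a - 1) ({j : ℤ | 0 ≤ j ∧ Z j} \ {a}) := by
      ext j
      simp only [Set.mem_ofPred_eq, h, Set.mem_insert_iff, Set.mem_sdiff, Set.mem_singleton_iff]
      by_cases h1 : j = a - 1
      · subst h1; simp; omega
      · simp [h1]; tauto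
    rw [e1, e2, Set.ncard_exchange (by simp [ha']) (by simp [ha]; omega)]

theorem fin_neg (P : Partition) (k : ℕ) (hk : 0 < k) (i : Fin k) :
    {j : ℤ | j < 0 ∧ ¬ isZeroAt P (((i : ℕ) : ℤ) + j * (k : ℤ))}.Finite := by
  obtain ⟨N, hN⟩ := P.eventually_zero
  refine (Set.finite_Icc (-(N:ℤ) - 2) 0).subset ?_
  rintro j ⟨h1, h2⟩
  refine ⟨?_, h1.le⟩
  by_contra hc
  apply h2
  have hi := i.2
  have h3 : j * (k:ℤ) ≤ j + 1 - k := by nlinarith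
  have h4 : ((i : ℕ) : ℤ) + j * k ≤ j := by omega
  refine ⟨(-(((i : ℕ) : ℤ) + j * k) - 1).toNat, ?_⟩
  unfold zpos
  rw [hN _ (by omega)]
  omega

theorem fin_pos (P : Partition) (k : ℕ) (hk : 0 < k) (i : Fin k) :
    {j : ℤ | 0 ≤ j ∧ isZeroAt P (((i : ℕ) : ℤ) + j * (k : ℤ))}.Finite := by
  refine (Set.finite_Icc 0 (P.parts 0 : ℤ)).subset ?_
  rintro j ⟨h1, n, h2⟩
  refine ⟨h1, ?_⟩
  have := P.antitone (Nat.zero_le n)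
  have h3 : j ≤ j * (k:ℤ) := by nlinarith
  unfold zpos at h2
  omega

theorem IsRimHook.bal {A B : Partition} {k : ℕ} (hk : 0 < k) (h : IsRimHook A B k) (i : Fin k) :
    Bal (fun j => isZeroAt A (((i : ℕ) : ℤ) + j * (k : ℤ))) ↔
    Bal (fun j => isZeroAt B (((i : ℕ) : ℤ) + j * (k : ℤ))) := by
  obtain ⟨x, hx, hx', hB⟩ := h.bead
  have hk0 : (k : ℤ) ≠ 0 := by omega
  by_cases hr : ∃ a : ℤ, x = ((i : ℕ) : ℤ) + a * k
  · obtain ⟨a, rfl⟩ := hr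
    have e : ∀ y : ℤ, ((i : ℕ) : ℤ) + a * k - k = ((i : ℕ) : ℤ) + (a - 1) * k := by intro; ring
    refine bal_move _ _ (fin_neg A k hk i) (fin_pos A k hk i) a hx ?_ ?_
    · rw [← e 0]; exact hx'
    · intro y
      rw [hB, e 0]
      have hk1 : k ≠ 0 := by omega
      simp [hk1]
  · have : (fun j : ℤ => isZeroAt A (((i : ℕ) : ℤ) + j * (k : ℤ))) =
        (fun j => isZeroAt B (((i : ℕ) : ℤ) + j * (k : ℤ))) := by
      funext j
      rw [hB]
      have h1 : ((i : ℕ) : ℤ) + j * k ≠ x := fun h => hr ⟨j, h.symm⟩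
      have h2 : ((i : ℕ) : ℤ) + j * k ≠ x - k := fun h => hr ⟨j + 1, by linarith⟩
      simp [h1, h2]
    rw [this]

theorem bal_empty (k : ℕ) (hk : 0 < k) (i : Fin k) :
    Bal (fun j => isZeroAt Partition.empty (((i : ℕ) : ℤ) + j * (k : ℤ))) := by
  have hz : ∀ y, isZeroAt Partition.empty y ↔ y < 0 := by
    intro y
    unfold isZeroAt zpos Partition.empty
    constructor
    · rintro ⟨n, hn⟩; push_cast at hn; omega
    · intro h; exact ⟨(-y - 1).toNat, by push_cast; omega⟩
  have hi := i.2
  unfold Bal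
  have e1 : {j : ℤ | j < 0 ∧ ¬ isZeroAt Partition.empty (((i : ℕ) : ℤ) + j * (k : ℤ))} = ∅ := by
    ext j
    simp only [hz, Set.mem_ofPred_eq, Set.mem_empty_iff_false, iff_false, not_and, not_not]
    intro hj
    have : j * (k:ℤ) ≤ -k := by nlinarith
    omega
  have e2 : {j : ℤ | 0 ≤ j ∧ isZeroAt Partition.empty (((i : ℕ) : ℤ) + j * (k : ℤ))} = ∅ := by
    ext j
    simp only [hz, Set.mem_ofPred_eq, Set.mem_empty_iff_false, iff_false, not_and, not_lt]
    intro hj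
    positivity
  rw [e1, e2]

theorem empty_no_hook (k : ℕ) : ¬ ∃ C', IsRimHook Partition.empty C' k := by
  rintro ⟨C, -, ⟨c, hc, -⟩, -⟩
  simp [Partition.cells, Partition.empty] at hc

theorem exists_hook_of_bal {P : Partition} {k : ℕ} (hk : 0 < k) (hP : 0 < P.parts 0)
    (hb : ∀ i : Fin k, Bal (fun j => isZeroAt P (((i : ℕ) : ℤ) + j * (k : ℤ)))) :
    ∃ B, IsRimHook P B k := by
  by_contra hno
  have hcl : ∀ x, isZeroAt P x → isZeroAt P (x - k) := by
    intro x hx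
    by_contra h
    exact hno (exists_rimHook hk hx h)
  obtain ⟨r, hr⟩ : ∃ r, r = P.parts 0 - 1 := ⟨_, rfl⟩
  have hr0 : isZeroAt P (r : ℤ) := ⟨0, by unfold zpos; omega⟩
  have h := hb ⟨r % k, Nat.mod_lt _ hk⟩
  unfold Bal at h
  have hq : ((r % k : ℕ) : ℤ) + ((r / k : ℕ) : ℤ) * k = r := by
    have := Nat.mod_add_div r k
    rw [mul_comm] at this
    exact_mod_cast this
  have hdown : ∀ t : ℕ, isZeroAt P ((r : ℤ) - t * k) := by
    intro t
    induction t with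
    | zero => simpa using hr0
    | succ t ih =>
      have := hcl _ ih
      convert this using 1
      push_cast; ring
  have e1 : {j : ℤ | j < 0 ∧ ¬ isZeroAt P (((r % k : ℕ) : ℤ) + j * (k : ℤ))} = ∅ := by
    ext j
    simp only [Set.mem_ofPred_eq, Set.mem_empty_iff_false, iff_false, not_and, not_not]
    intro hj
    have h2 := hdown (((r / k : ℕ) : ℤ) - j).toNat
    have h3 : ((((r / k : ℕ) : ℤ) - j).toNat : ℤ) = ((r / k : ℕ) : ℤ) - j := by
      apply Int.toNat_of_nonneg
      have : (0:ℤ) ≤ ((r / k : ℕ) : ℤ) := Int.natCast_nonneg _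
      omega
    rw [h3] at h2
    convert h2 using 1
    rw [← hq]
    have : (((r % k : ℕ) : ℤ) + ((r / k : ℕ) : ℤ) * k) = r := hq
    linarith
  dsimp only at h
  rw [e1, Set.ncard_empty] at h
  have h4 := (Set.ncard_eq_zero (fin_pos P k hk ⟨r % k, Nat.mod_lt _ hk⟩)).1 h.symm
  have h5 : ((r / k : ℕ) : ℤ) ∈ (∅ : Set ℤ) := by
    rw [← h4]
    refine ⟨Int.natCast_nonneg _, ?_⟩
    dsimp only
    rw [hq]; exact hr0
  exact h5

theorem cells_finite (P : Partition) : P.cells.Finite := by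
  obtain ⟨N, hN⟩ := P.eventually_zero
  refine ((Set.finite_Iio N).prod (Set.finite_Iio (P.parts 0))).subset ?_
  rintro ⟨n, c⟩ h
  simp only [Partition.cells, Set.mem_ofPred_eq] at h
  have := P.antitone (Nat.zero_le n)
  refine ⟨?_, ?_⟩
  · by_contra hc
    have := hN n (by simpa using hc)
    omega
  · simp only [Set.mem_Iio]; omega

theorem IsRimHook.cells_lt {A B : Partition} {k : ℕ} (h : IsRimHook A B k) :
    B.cells.ncard < A.cells.ncard := by
  apply Set.ncard_lt_ncard _ (cells_finite A)
  obtain ⟨hle, ⟨c, hc1, hc2⟩, -⟩ := h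
  have hle' : ∀ i, B.parts i ≤ A.parts i := hle
  refine ⟨?_, fun hs => hc2 (hs hc1)⟩
  rintro ⟨n, d⟩ hd
  simp only [Partition.cells, Set.mem_ofPred_eq] at hd ⊢
  have := hle' n
  omega

theorem reach_empty {k : ℕ} (hk : 0 < k) : ∀ (s : ℕ) (P : Partition), P.cells.ncard = s →
    (∀ i : Fin k, Bal (fun j => isZeroAt P (((i : ℕ) : ℤ) + j * (k : ℤ)))) →
    Relation.ReflTransGen (fun A B => IsRimHook A B k) P Partition.empty := by
  intro s
  induction s using Nat.strong_induction_on with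
  | _ s ih =>
    intro P hs hb
    rcases Nat.eq_zero_or_pos (P.parts 0) with h0 | h0
    · have : P = Partition.empty := by
        obtain ⟨p, ha, he⟩ := P
        simp only [Partition.empty, Partition.mk.injEq]
        funext n
        have := ha (Nat.zero_le n)
        simp only at h0
        omega
      rw [this]
    · obtain ⟨B, hB⟩ := exists_hook_of_bal hk h0 hb
      exact Relation.ReflTransGen.head hB
        (ih _ (hs ▸ hB.cells_lt) B rfl (fun i => (hB.bal hk i).1 (hb i)))

/-- Empty `k`-core criterion: a partition has empty `k`-core if
and only if the intrinsic median of each subsequence (mod `k`) of its 0/1 sequence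
coincides with the median of the whole sequence (which sits at the gap below
position `0`): for each residue `i`, the number of ones of the subsequence before
that gap equals the number of its zeros after it. -/
theorem empty_kCore_iff_subsequence_medians (k : ℕ) (hk : 2 ≤ k) (P : Partition) :
    IsKCore k P Partition.empty ↔
      ∀ i : Fin k,
        {j : ℤ | j < 0 ∧ ¬ isZeroAt P (((i : ℕ) : ℤ) + j * (k : ℤ))}.ncard =
          {j : ℤ | 0 ≤ j ∧ isZeroAt P (((i : ℕ) : ℤ) + j * (k : ℤ))}.ncard := by
  have hk0 : 0 < k := by omega
  constructor
  · rintro ⟨h, -⟩ i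
    change Bal (fun j => isZeroAt P (((i : ℕ) : ℤ) + j * (k : ℤ)))
    induction h using Relation.ReflTransGen.head_induction_on with
    | refl => exact bal_empty k hk0 i
    | head h1 _ ih => exact (h1.bal hk0 i).2 ih
  · intro h
    exact ⟨reach_empty hk0 _ P rfl h, empty_no_hook k⟩

end RimHookPaper
end

section
/- For any rim hook tableau T of shape λ (of arbitrary type), the sign of its zero permutation satisfies sign(π_T) = (−1)^{ht(T)}. -/
open scoped BigOperators

namespace RimHookPaper

theorem parts_length_zero (P : Partition) (i : ℕ) (h : P.length ≤ i) : P.parts i = 0 := by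
  have h0 : P.parts P.length = 0 := by
    obtain ⟨N, hN⟩ := P.eventually_zero
    exact Nat.sInf_mem (s := {N | P.parts N = 0}) ⟨N, hN N le_rfl⟩
  have := P.antitone h
  omega

theorem rowCount_skew (A B : Partition) (m m' : ℕ) (hmm : m ≤ m')
    (h : ∀ n, B.parts n < A.parts n ↔ m ≤ n ∧ n ≤ m') :
    rowCount (A.skew B) - 1 = m' - m := by
  have : Prod.fst '' (A.skew B) = ((Finset.Icc m m' : Finset ℕ) : Set ℕ) := by
    ext n
    simp only [Set.mem_image, Prod.exists, exists_and_right, exists_eq_right, Finset.coe_Icc,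
      Set.mem_Icc, ← h n, Partition.skew, Partition.cells, Set.mem_diff, Set.mem_setOf_eq]
    constructor
    · rintro ⟨x, hx⟩; omega
    · intro hn; exact ⟨B.parts n, hn, by omega⟩
  rw [rowCount, this, Set.ncard_coe_finset, Nat.card_Icc]
  omega

theorem cycleFun_self (m n : ℕ) : cycleFun m m n = n := by
  unfold cycleFun; split_ifs <;> omega

theorem step_aux (A B : Partition) (t : ℕ) (f g : ℕ → ℕ) (hs : IsStep A B t)
    (ht : StepTrack A B f g) :
    (∀ i, B.parts i ≤ A.parts i) ∧
    ((g = f ∧ rowCount (A.skew B) - 1 = 0) ∨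
    ∃ m m', m ≤ m' ∧ 0 < A.parts m' ∧ (g = fun i => cycleFun m m' (f i)) ∧
      rowCount (A.skew B) - 1 = m' - m) := by
  have hle : ∀ i, B.parts i ≤ A.parts i := by
    rcases hs with ⟨_, rfl⟩ | ⟨_, h, _⟩
    · intro i; exact le_rfl
    · exact h
  refine ⟨hle, ?_⟩
  by_cases hAB : A = B
  · subst hAB
    left
    have hr : rowCount (A.skew A) - 1 = 0 := by simp [rowCount, Partition.skew]
    refine ⟨?_, hr⟩
    rcases ht with ⟨_, h⟩ | ⟨m, m', hm, h1, h2, h3, rfl⟩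
    · exact h
    · rcases hm.eq_or_lt with rfl | hlt
      · funext i; exact cycleFun_self _ _
      · have h4 := h2 m le_rfl hlt
        have := A.antitone (Nat.le_succ m)
        simp only [zpos, Nat.succ_eq_add_one] at *
        push_cast at h4
        omega
  · right
    rcases ht with ⟨h, _⟩ | ⟨m, m', hm, h1, h2, h3, hg⟩
    · exact absurd h hAB
    · have hB : ∀ n, B.parts n < A.parts n ↔ m ≤ n ∧ n ≤ m' := by
        have hout : ∀ n, ¬ (m ≤ n ∧ n ≤ m') → B.parts n = A.parts n := by
          intro n hn
          have : zpos B n = zpos A n := by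
            by_cases hn' : n < m
            · exact h1 n hn'
            · exact h3 n (by omega)
          simp only [zpos] at this
          omega
        have hin : ∀ n, m ≤ n → n < m' → B.parts n + 1 = A.parts (n + 1) := by
          intro n a b
          have := h2 n a b
          simp only [zpos] at this
          push_cast at this
          omega
        intro n
        constructor
        · intro h
          by_contra hc
          have := hout n hc
          omega
        · rintro ⟨a, b⟩
          by_cases hn : n < m'
          · have := hin n a hn
            have := A.antitone (Nat.le_succ n)
            simp only [Nat.succ_eq_add_one] at this
            omega
          · have hnm : n = m' := by omega
            subst hnm
            rcases hm.eq_or_lt with rfl | hlt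
            · by_contra hc
              apply hAB
              have : A.parts = B.parts := by
                funext k
                by_cases hk : k = m
                · subst hk; have := hle k; omega
                · exact (hout k (by omega)).symm
              cases A; cases B; simpa using this
            · obtain ⟨k, rfl⟩ : ∃ k, n = k + 1 := ⟨n - 1, by omega⟩
              have := hin k (by omega) (by omega)
              have := B.antitone (Nat.le_succ k)
              simp only [Nat.succ_eq_add_one] at this
              omega
      have := (hB m').2 ⟨hm, le_rfl⟩
      exact ⟨m, m', hm, by omega, hg, rowCount_skew A B m m' hm hB⟩

theorem exists_perm (L m m' : ℕ) (hm : m ≤ m') (hL : m' < L) :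
    ∃ σ : Equiv.Perm (Fin L), Equiv.Perm.sign σ = (-1 : ℤˣ) ^ (m' - m) ∧
      ∀ x : Fin L, ((σ x : Fin L) : ℕ) = cycleFun m m' x := by
  obtain ⟨L, rfl⟩ : ∃ k, L = k + 1 := ⟨L - 1, by omega⟩
  have hle : (⟨m, by omega⟩ : Fin (L+1)) ≤ ⟨m', hL⟩ := hm
  refine ⟨(Fin.cycleIcc ⟨m, by omega⟩ ⟨m', hL⟩)⁻¹, ?_, ?_⟩
  · rw [Equiv.Perm.sign_inv, Fin.sign_cycleIcc_of_le hle]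
  · intro x
    have key : ∀ y : Fin (L+1), (y : ℕ) = cycleFun m m' x →
        (((Fin.cycleIcc ⟨m, by omega⟩ ⟨m', hL⟩)⁻¹ : Equiv.Perm (Fin (L+1))) x : ℕ) = cycleFun m m' x := by
      intro y hy
      have : x = Fin.cycleIcc ⟨m, by omega⟩ ⟨m', hL⟩ y := by
        unfold cycleFun at hy
        split_ifs at hy with c1 c2
        · have : y = ⟨m', hL⟩ := Fin.ext hy
          rw [this, Fin.cycleIcc_of_last hle]; exact Fin.ext c1
        · rw [Fin.cycleIcc_of_ge_of_lt (Fin.le_def.2 (by simp; omega)) (Fin.lt_def.2 (by simp; omega))]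
          apply Fin.ext
          rw [Fin.val_add_one_of_lt' (by omega)]
          omega
        · by_cases h : (x : ℕ) < m
          · rw [Fin.cycleIcc_of_lt (Fin.lt_def.2 (by simp; omega))]; exact Fin.ext hy.symm
          · rw [Fin.cycleIcc_of_gt (Fin.lt_def.2 (by simp; omega))]; exact Fin.ext hy.symm
      rw [← hy, this]
      simp
    refine key ⟨cycleFun m m' x, ?_⟩ rfl
    have := x.2
    unfold cycleFun; split_ifs <;> omega

/-- for any rim hook tableau `T` of shape `λ` (of arbitrary type),
the sign of its zero permutation is `(−1)^{ht(T)}`. -/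
theorem sign_zeroPerm_eq_neg_one_pow_height (P : Partition) (μ : List ℕ)
    (T : RHT P μ) (π : Equiv.Perm (Fin P.length)) (h : IsZeroPerm T π) :
    Equiv.Perm.sign π = (-1 : ℤˣ) ^ T.height := by
  obtain ⟨q, hq1, hq2, hq3⟩ := h
  have main : ∀ j : Fin (μ.length + 1), (∀ i, (T.chain j).parts i ≤ P.parts i) ∧
      ∃ ρ : Equiv.Perm (Fin P.length), (∀ x : Fin P.length, q j x = ρ x) ∧
        Equiv.Perm.sign ρ * (-1 : ℤˣ) ^ (∑ k : Fin μ.length with k.val < j.val,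
          (rowCount ((T.chain k.succ).skew (T.chain k.castSucc)) - 1)) =
        Equiv.Perm.sign (Fin.revPerm : Equiv.Perm (Fin P.length)) * (-1 : ℤˣ) ^ T.height := by
    intro j
    induction j using Fin.reverseInduction with
    | last =>
      refine ⟨fun i => by rw [T.chain_last], Fin.revPerm, ?_, ?_⟩
      · intro x
        rw [hq1 x x.2, Fin.revPerm_apply, Fin.val_rev]
        omega
      · simp [RHT.height]
    | cast j ih =>
      obtain ⟨hle, ρ, hρ, hs⟩ := ih
      obtain ⟨hBA, hst⟩ := step_aux _ _ _ _ _ (T.step j) (hq2 j)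
      refine ⟨fun i => (hBA i).trans (hle i), ?_⟩
      have hsum : (∑ k : Fin μ.length with k.val < j.succ.val,
          (rowCount ((T.chain k.succ).skew (T.chain k.castSucc)) - 1)) =
          (rowCount ((T.chain j.succ).skew (T.chain j.castSucc)) - 1) +
          ∑ k : Fin μ.length with k.val < j.castSucc.val,
          (rowCount ((T.chain k.succ).skew (T.chain k.castSucc)) - 1) := by
        rw [← Finset.sum_insert (a := j)
          (f := fun k : Fin μ.length => rowCount ((T.chain k.succ).skew (T.chain k.castSucc)) - 1)
          (by simp)]
        apply Finset.sum_congr _ (fun _ _ => rfl)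
        ext k
        simp only [Finset.mem_filter, Finset.mem_univ, true_and, Finset.mem_insert, Fin.ext_iff,
          Fin.val_succ, Fin.val_castSucc]
        omega
      rw [hsum, pow_add] at hs
      rcases hst with ⟨hg, hr⟩ | ⟨m, m', hm, hpos, hg, hr⟩
      · refine ⟨ρ, ?_, ?_⟩
        · rw [hg]; exact hρ
        · rw [hr, pow_zero, one_mul] at hs
          exact hs
      · have hL : m' < P.length := by
          by_contra hc
          have := parts_length_zero P m' (by omega)
          have := hle m'
          omega
        obtain ⟨σ, hσ, hσf⟩ := exists_perm P.length m m' hm hL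
        refine ⟨σ * ρ, ?_, ?_⟩
        · intro x
          rw [hg, Equiv.Perm.mul_apply, hσf, ← hρ]
        · rw [← hs, hr, Equiv.Perm.sign_mul, hσ]
          ac_rfl
  obtain ⟨_, ρ, hρ, hs⟩ := main 0
  have hrev : ρ * π = Fin.revPerm := by
    ext i
    have := hq3 i
    rw [hρ] at this
    rw [Equiv.Perm.mul_apply, this, Fin.revPerm_apply, Fin.val_rev]
    omega
  rw [← hrev] at hs
  simp only [Fin.val_zero, not_lt_zero, Finset.filter_false, Finset.sum_empty, pow_zero, mul_one,
    Equiv.Perm.sign_mul, mul_assoc] at hs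
  have h2 : Equiv.Perm.sign π * (-1 : ℤˣ) ^ T.height = 1 := by
    have := hs
    rwa [eq_comm, mul_eq_left] at this
  rw [mul_eq_one_iff_eq_inv] at h2
  rw [h2, Int.units_inv_eq_self]

end RimHookPaper
end

section
/- Let k ≥ 2 and let λ be a partition with empty k-core, and set p := |λ|/k. Then the zero permutation π_T is the same for all rim hook tableaux T of shape λ and type (k^p); this common permutation is denoted π_λ. -/
open scoped BigOperators

namespace RimHookPaper

theorem zpos_strictAnti (A : Partition) {m n : ℕ} (h : m < n) : zpos A n < zpos A m := by
  have := A.antitone h.le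
  unfold zpos
  omega

theorem zpos_inj (A : Partition) {m n : ℕ} (h : zpos A m = zpos A n) : m = n := by
  rcases lt_trichotomy m n with h1 | h1 | h1
  · have := zpos_strictAnti A h1; omega
  · exact h1
  · have := zpos_strictAnti A h1; omega

theorem skew_ncard (A B : Partition) (M : ℕ) (hle : B ≤ A)
    (hM : ∀ n, M ≤ n → zpos B n = zpos A n) :
    ((A.skew B).ncard : ℤ) = ∑ n ∈ Finset.range M, (zpos A n - zpos B n) := by
  have h1 : A.skew B = ↑(((Finset.range M).sigma
      (fun n => Finset.Ico (B.parts n) (A.parts n))).map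
      (Equiv.sigmaEquivProd ℕ ℕ).toEmbedding) := by
    ext ⟨x, y⟩
    simp only [Partition.skew, Partition.cells, Set.mem_sdiff, Set.mem_ofPred_eq, Finset.mem_coe,
      Finset.mem_map_equiv, Finset.mem_sigma, Equiv.sigmaEquivProd, Equiv.coe_fn_symm_mk,
      Finset.mem_range, Finset.mem_Ico]
    constructor
    · rintro ⟨a, b⟩
      refine ⟨?_, by omega, a⟩
      by_contra hx
      have := hM x (by omega)
      unfold zpos at this
      omega
    · rintro ⟨_, a, b⟩
      exact ⟨b, by omega⟩
  rw [h1, Set.ncard_coe_finset, Finset.card_map, Finset.card_sigma]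
  push_cast
  refine Finset.sum_congr rfl fun n _ => ?_
  have : B.parts n ≤ A.parts n := hle n
  rw [Nat.card_Ico]
  unfold zpos
  omega

theorem telescope (a b : ℕ → ℤ) (m m' : ℕ) (hmm : m ≤ m')
    (h1 : ∀ n, n < m → b n = a n) (h2 : ∀ n, m ≤ n → n < m' → b n = a (n + 1)) :
    ∑ n ∈ Finset.range (m' + 1), (a n - b n) = a m - b m' := by
  have key : ∀ M, m ≤ M → M ≤ m' → ∑ n ∈ Finset.range M, (a n - b n) = a m - a M := by
    intro M hM
    induction M, hM using Nat.le_induction with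
    | base =>
      intro _
      rw [sub_self]
      refine Finset.sum_eq_zero fun n hn => ?_
      rw [h1 n (Finset.mem_range.1 hn), sub_self]
    | succ M hM ih =>
      intro h
      rw [Finset.sum_range_succ, ih (by omega), h2 M hM (by omega)]
      ring
  rw [Finset.sum_range_succ, key m' hmm le_rfl]
  ring

theorem step_lemma (A B : Partition) (f g : ℕ → ℕ) (k : ℕ) (hk : 2 ≤ k)
    (hs : IsStep A B k) (ht : StepTrack A B f g) :
    (∀ i, (k : ℤ) ∣ zpos B (g i) - zpos A (f i)) ∧
    (∀ i j, (k : ℤ) ∣ zpos A (f i) - zpos A (f j) → zpos A (f i) < zpos A (f j) →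
      zpos B (g i) < zpos B (g j)) := by
  rcases ht with ⟨rfl, rfl⟩ | ⟨m, m', hmm, h1, h2, h3, rfl⟩
  · exact ⟨fun i => by simp, fun i j _ h => h⟩
  rcases hs with ⟨h0, _⟩ | ⟨_, hle, _, _, _, hc⟩
  · omega
  have hk' : zpos B m' = zpos A m - k := by
    have e1 := skew_ncard A B (m' + 1) hle (fun n hn => h3 n (by omega))
    rw [telescope _ _ m m' hmm h1 h2, hc] at e1
    omega
  have hc : ∀ n, zpos B (cycleFun m m' n) = if n = m then zpos A m - k else zpos A n := by
    intro n
    unfold cycleFun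
    split_ifs with a b
    · exact hk'
    · rw [h2 (n - 1) (by omega) (by omega)]
      congr 1; omega
    · rcases lt_or_ge n m with c | c
      · exact h1 n c
      · exact h3 n (by omega)
  have hinj : ∀ x y, cycleFun m m' x = cycleFun m m' y → x = y := by
    intro x y
    unfold cycleFun
    split_ifs <;> omega
  constructor
  · intro i
    simp only [hc]
    split_ifs with a
    · rw [a]; exact ⟨-1, by ring⟩
    · simp
  · intro i j hd hlt
    simp only
    have hne : zpos B (cycleFun m m' (f i)) ≠ zpos B (cycleFun m m' (f j)) := by
      intro h
      have := hinj _ _ (zpos_inj B h)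
      rw [this] at hlt
      omega
    have hge : zpos A (f i) + k ≤ zpos A (f j) := by
      have : (k : ℤ) ∣ zpos A (f j) - zpos A (f i) := (dvd_sub_comm).1 hd
      have := Int.le_of_dvd (by omega) this
      omega
    refine lt_of_le_of_ne ?_ hne
    rw [hc, hc]
    split_ifs with a b b
    · rw [a, b] at hlt
    · rw [a] at hlt; omega
    · rw [b] at hge; omega
    · omega

theorem final_props (k p : ℕ) (hk : 2 ≤ k) (P : Partition)
    (T : RHT P (List.replicate p k)) (π : Equiv.Perm (Fin P.length)) (h : IsZeroPerm T π) :
    (∀ i : Fin P.length, (k : ℤ) ∣ (i : ℤ) - P.length - zpos P (P.length - 1 - (π i : ℕ))) ∧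
    (∀ i j : Fin P.length,
      (k : ℤ) ∣ zpos P (P.length - 1 - (π i : ℕ)) - zpos P (P.length - 1 - (π j : ℕ)) →
      zpos P (P.length - 1 - (π i : ℕ)) < zpos P (P.length - 1 - (π j : ℕ)) → i < j) := by
  obtain ⟨q, q1, q2, q3⟩ := h
  have main : ∀ s : Fin ((List.replicate p k).length + 1),
      (∀ a, a < P.length → (k : ℤ) ∣ zpos (T.chain s) (q s a) - zpos P (P.length - 1 - a)) ∧
      (∀ a b, a < P.length → b < P.length →
        (k : ℤ) ∣ zpos P (P.length - 1 - a) - zpos P (P.length - 1 - b) →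
        zpos P (P.length - 1 - a) < zpos P (P.length - 1 - b) →
        zpos (T.chain s) (q s a) < zpos (T.chain s) (q s b)) := by
    intro s
    induction s using Fin.reverseInduction with
    | last =>
      rw [T.chain_last]
      refine ⟨fun a ha => by rw [q1 a ha]; simp, fun a b ha hb _ hlt => ?_⟩
      rw [q1 a ha, q1 b hb]; exact hlt
    | cast s ih =>
      have hs := T.step s
      have hget : (List.replicate p k).get s = k := by simp
      rw [hget] at hs
      obtain ⟨s1, s2⟩ := step_lemma _ _ _ _ k hk hs (q2 s)
      refine ⟨fun a ha => ?_, fun a b ha hb hd hlt => ?_⟩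
      · have := dvd_add (s1 a) (ih.1 a ha)
        simpa using this
      · refine s2 a b ?_ (ih.2 a b ha hb hd hlt)
        have := dvd_add (dvd_sub (ih.1 a ha) (ih.1 b hb)) hd
        obtain ⟨u, hu⟩ := this
        exact ⟨u, by rw [← hu]; ring⟩
  obtain ⟨m1, m2⟩ := main 0
  have hz : ∀ i : Fin P.length, zpos (T.chain 0) (q 0 (π i)) = (i : ℤ) - P.length := by
    intro i
    rw [T.chain_zero, q3 i]
    have := i.2
    simp only [zpos, Partition.empty]
    omega
  refine ⟨fun i => ?_, fun i j hd hlt => ?_⟩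
  · rw [← hz]; exact m1 _ (π i).2
  · have := m2 _ _ (π i).2 (π j).2 hd hlt
    rw [hz, hz] at this
    rw [Fin.lt_def]; omega

theorem perm_eq_one {l : ℕ} (k : ℤ) (σ : Equiv.Perm (Fin l))
    (h1 : ∀ i, k ∣ ((σ i : ℕ) : ℤ) - ((i : ℕ) : ℤ))
    (h2 : ∀ i j : Fin l, k ∣ ((i : ℕ) : ℤ) - ((j : ℕ) : ℤ) → i < j → σ i < σ j) (i : Fin l) :
    σ i = i := by
  induction i using WellFoundedLT.induction with
  | ind i ih =>
    rcases lt_trichotomy (σ i) i with h | h | h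
    · exact σ.injective (ih _ h)
    · exact h
    · exfalso
      obtain ⟨j, hj⟩ := σ.surjective i
      rcases lt_trichotomy i j with c | c | c
      · have := h1 j
        rw [hj] at this
        have := h2 i j this c
        rw [hj] at this
        exact absurd h this.asymm
      · rw [← c] at hj; rw [hj] at h; exact lt_irrefl _ h
      · have := ih j c
        rw [hj] at this; rw [this] at c; exact lt_irrefl _ c

/-- if `λ` has empty `k`-core and `p = |λ|/k`, then all rim hook
tableaux of shape `λ` and type `(k^p)` have the same zero permutation. -/
theorem zeroPerm_unique_for_type_k_pow_p (k p : ℕ) (hk : 2 ≤ k) (P : Partition)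
    (hcore : IsKCore k P Partition.empty) (hp : P.size = k * p)
    (T T' : RHT P (List.replicate p k)) (π π' : Equiv.Perm (Fin P.length))
    (h : IsZeroPerm T π) (h' : IsZeroPerm T' π') : π = π' := by
  obtain ⟨a1, a2⟩ := final_props k p hk P T π h
  obtain ⟨b1, b2⟩ := final_props k p hk P T' π' h'
  have key : ∀ i, (π.trans π'.symm) i = i := by
    apply perm_eq_one (k : ℤ)
    · intro i
      have e1 := a1 i
      have e2 := b1 (π'.symm (π i))
      rw [Equiv.apply_symm_apply] at e2
      have := dvd_sub e2 e1
      obtain ⟨u, hu⟩ := this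
      exact ⟨u, by rw [← hu, Equiv.trans_apply]; ring⟩
    · intro i j hd hlt
      have hdd : (k : ℤ) ∣ zpos P (P.length - 1 - (π i : ℕ)) - zpos P (P.length - 1 - (π j : ℕ)) := by
        have := dvd_add (dvd_sub (a1 j) (a1 i)) hd
        obtain ⟨u, hu⟩ := this
        exact ⟨u, by rw [← hu]; ring⟩
      have hlt' : zpos P (P.length - 1 - (π i : ℕ)) < zpos P (P.length - 1 - (π j : ℕ)) := by
        rcases lt_trichotomy (zpos P (P.length - 1 - (π i : ℕ)))
          (zpos P (P.length - 1 - (π j : ℕ))) with c | c | c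
        · exact c
        · have e := zpos_inj P c
          have : π i = π j := by
            apply Fin.ext
            have := (π i).2
            have := (π j).2
            omega
          exact absurd (π.injective this) hlt.ne
        · exact absurd hlt (a2 j i ((dvd_sub_comm).1 hdd) c).asymm
      apply b2
      · simpa using hdd
      · simpa using hlt'
  ext i
  have := key i
  rw [Equiv.trans_apply, Equiv.symm_apply_eq] at this
  rw [this]

end RimHookPaper
end

section
/- Let k ≥ 2 and let λ be a partition with empty k-core, p := |λ|/k. Then the irreducible character of S_{kp} indexed by λ, evaluated on permutations of cycle type (k^p), satisfies χ^λ_{(k^p)} = sign(π_λ) · |RHT_{(k^p)}^λ|, where π_λ is the common zero permutation of all rim hook tableaux of shape λ and type (k^p). -/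
open scoped BigOperators

namespace RimHookPaper

/-- The structure of a rim hook of length `t`. -/
def HookShape (A B : Partition) (t m m' : ℕ) : Prop :=
  m ≤ m' ∧
    (∀ n, n < m → zpos B n = zpos A n) ∧
    (∀ n, m ≤ n → n < m' → zpos B n = zpos A (n + 1)) ∧
    (∀ n, m' < n → zpos B n = zpos A n) ∧
    zpos B m' = zpos A m - t ∧
    rowCount (A.skew B) - 1 = m' - m ∧
    B.parts m' < A.parts m' ∧ (∀ n, B.parts n < A.parts n ↔ m ≤ n ∧ n ≤ m') ∧
    (∀ n, B.parts n ≤ A.parts n)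

theorem crossing {S : Set (ℕ × ℕ)} {c d : ℕ × ℕ}
    (h : Relation.ReflTransGen (fun x y => x ∈ S ∧ y ∈ S ∧ Adj x y) c d) (n : ℕ)
    (hc : c.1 ≤ n) (hd : n < d.1) : ∃ j, (n, j) ∈ S ∧ (n + 1, j) ∈ S := by
  induction h with
  | refl => omega
  | @tail x y _ hxy ih =>
    by_cases hx : n < x.1
    · exact ih hx
    · obtain ⟨hxS, hyS, hadj⟩ := hxy
      obtain ⟨x1, x2⟩ := x
      obtain ⟨y1, y2⟩ := y
      simp only [Adj] at hadj hx hd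
      have e1 : x1 = n := by omega
      have e2 : y1 = n + 1 := by omega
      have e3 : x2 = y2 := by omega
      subst e1 e2 e3
      exact ⟨_, hxS, hyS⟩

theorem mem_skew {A B : Partition} {n j : ℕ} :
    (n, j) ∈ A.skew B ↔ B.parts n ≤ j ∧ j < A.parts n := by
  simp [Partition.skew, Partition.cells, and_comm]

theorem exists_shape {A B : Partition} {t : ℕ} (h : IsRimHook A B t) :
    ∃ m m', HookShape A B t m m' := by
  obtain ⟨hle, ⟨⟨r, s⟩, hrs⟩, hconn, hsq, hcard⟩ := h
  have hle' : ∀ i, B.parts i ≤ A.parts i := hle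
  have hrow : ∃ n, B.parts n < A.parts n := ⟨r, by rw [mem_skew] at hrs; omega⟩
  obtain ⟨N, hN⟩ := A.eventually_zero
  have hb : ∀ n, B.parts n < A.parts n → n ≤ N := by
    intro n hn
    by_contra hc
    have := hN n (by omega)
    omega
  classical
  let m := Nat.find hrow
  let m' := Nat.findGreatest (fun n => B.parts n < A.parts n) N
  have hm : B.parts m < A.parts m := Nat.find_spec hrow
  have hm' : B.parts m' < A.parts m' :=
    Nat.findGreatest_spec (P := fun n => B.parts n < A.parts n) (hb m hm) hm
  have hmin : ∀ n, B.parts n < A.parts n → m ≤ n := fun n hn => Nat.find_min' hrow hn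
  have hmax : ∀ n, B.parts n < A.parts n → n ≤ m' := fun n hn =>
    Nat.le_findGreatest (P := fun n => B.parts n < A.parts n) (hb n hn) hn
  clear_value m m'
  have hmm : m ≤ m' := hmin _ hm'
  have hcross : ∀ n, m ≤ n → n < m' → B.parts n < A.parts (n + 1) := by
    intro n h1 h2
    obtain ⟨j, hj1, hj2⟩ := crossing
      (hconn (m, B.parts m) (mem_skew.2 ⟨le_rfl, hm⟩)
        (m', B.parts m') (mem_skew.2 ⟨le_rfl, hm'⟩)) n h1 h2
    rw [mem_skew] at hj1 hj2
    omega
  have hstep : ∀ n, m ≤ n → n < m' → A.parts (n + 1) = B.parts n + 1 := by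
    intro n h1 h2
    have h3 := hcross n h1 h2
    by_contra hne
    apply hsq
    have h4 := A.antitone (Nat.le_succ n)
    have h5 := B.antitone (Nat.le_succ n)
    simp only [Nat.succ_eq_add_one] at h4 h5
    refine ⟨n, B.parts n, ?_, ?_, ?_, ?_⟩ <;> rw [mem_skew] <;> omega
  have hiff : ∀ n, B.parts n < A.parts n ↔ m ≤ n ∧ n ≤ m' := by
    intro n
    refine ⟨fun hn => ⟨hmin n hn, hmax n hn⟩, fun ⟨h1, h2⟩ => ?_⟩
    rcases Nat.lt_or_ge n m' with h3 | h3
    · have h4 := A.antitone (Nat.le_succ n)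
      have := hstep n h1 h3
      simp only [Nat.succ_eq_add_one] at h4
      omega
    · have : n = m' := by omega
      rw [this]; exact hm'
  have hout : ∀ n, ¬ (m ≤ n ∧ n ≤ m') → zpos B n = zpos A n := by
    intro n hn
    rw [← hiff] at hn
    have := hle' n
    unfold zpos
    omega
  have hsum : ∀ d, m + d ≤ m' →
      ((∑ n ∈ Finset.Icc m (m + d), (A.parts n - B.parts n) : ℕ) : ℤ)
        = zpos A m - zpos B (m + d) := by
    intro d
    induction d with
    | zero =>
      intro _
      simp [zpos]
      omega
    | succ d ih =>
      intro hd
      have h1 := ih (by omega)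
      have h2 := hstep (m + d) (by omega) (by omega)
      have h3 := hle' (m + (d + 1))
      rw [← add_assoc] at *
      rw [Finset.sum_Icc_succ_top (by omega), Nat.cast_add, h1]
      unfold zpos
      push_cast [h3]
      rw [h2]
      push_cast
      ring
  have hcardsum : (A.skew B).ncard = ∑ n ∈ Finset.Icc m m', (A.parts n - B.parts n) := by
    have e : A.skew B = (((Finset.Icc m m').biUnion
        fun n => (Finset.Ico (B.parts n) (A.parts n)).image fun j => (n, j)) : Finset (ℕ × ℕ)) := by
      ext ⟨n, j⟩
      have := hiff n
      simp only [mem_skew, Finset.coe_biUnion, Finset.coe_image, Set.mem_iUnion, Set.mem_image,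
        Finset.mem_coe, Finset.mem_Icc, Finset.mem_Ico, Prod.mk.injEq]
      constructor
      · intro hj
        exact ⟨n, this.1 (by omega), j, hj, rfl, rfl⟩
      · rintro ⟨n', _, j', hj', rfl, rfl⟩
        exact hj'
    rw [e, Set.ncard_coe_finset, Finset.card_biUnion]
    · refine Finset.sum_congr rfl fun n _ => ?_
      rw [Finset.card_image_of_injective _ (fun a b hab => (Prod.mk.inj hab).2), Nat.card_Ico]
    · intro a _ b _ hab
      simp only [Function.onFun]
      rw [Finset.disjoint_left]
      intro x hx hx'
      simp only [Finset.mem_image] at hx hx'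
      obtain ⟨_, _, rfl⟩ := hx
      obtain ⟨_, _, h'⟩ := hx'
      exact hab (Prod.mk.inj h').1.symm
  refine ⟨m, m', hmm, fun n hn => hout n (by omega), ?_, fun n hn => hout n (by omega), ?_, ?_,
    hm', hiff, hle'⟩
  · intro n h1 h2
    have := hstep n h1 h2
    unfold zpos
    omega
  · have := hsum (m' - m) (by omega)
    rw [Nat.add_sub_cancel' hmm, ← hcardsum, hcard] at this
    omega
  · have e : Prod.fst '' (A.skew B) = ((Finset.Icc m m' : Finset ℕ) : Set ℕ) := by
      ext n
      simp only [Set.mem_image, Prod.exists, Finset.coe_Icc, Set.mem_Icc]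
      rw [← hiff]
      constructor
      · rintro ⟨a, b, hab, rfl⟩
        rw [mem_skew] at hab
        omega
      · intro hn
        exact ⟨n, B.parts n, mem_skew.2 ⟨le_rfl, hn⟩, rfl⟩
    rw [rowCount, e, Set.ncard_coe_finset, Nat.card_Icc]
    omega

theorem track_unique {A B : Partition} {t m m' : ℕ} (h : HookShape A B t m m') {f g : ℕ → ℕ}
    (hs : StepTrack A B f g) : g = fun i => cycleFun m m' (f i) := by
  obtain ⟨hmm, -, -, -, -, -, hlt, hiff, hle⟩ := h
  rcases hs with ⟨rfl, _⟩ | ⟨n, n', hnn, h1, h2, h3, rfl⟩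
  · omega
  · have key : ∀ i, zpos B i = zpos A i ↔ ¬ (n ≤ i ∧ i ≤ n') := by
      have hex : n = n' → zpos B n ≠ zpos A n := by
        rintro rfl heq
        rcases lt_trichotomy m' n with hc | hc | hc
        · have := h1 _ hc
          unfold zpos at this
          omega
        · subst hc
          unfold zpos at heq
          omega
        · have := h3 _ hc
          unfold zpos at this
          omega
      intro i
      constructor
      · rintro he ⟨ha, hb⟩
        rcases Nat.lt_or_ge i n' with hc | hc
        · have := h2 i ha hc
          have := zpos_lt A (Nat.lt_succ_self i)
          simp only [Nat.succ_eq_add_one] at this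
          omega
        · have hi : i = n' := by omega
          subst hi
          rcases Nat.lt_or_ge n i with hd | hd
          · have e := h2 (i - 1) (by omega) (by omega)
            rw [Nat.sub_add_cancel (by omega)] at e
            have := zpos_lt B (show i - 1 < i by omega)
            omega
          · have hi : i = n := by omega
            subst hi
            exact hex rfl he
      · intro hc
        rcases Nat.lt_or_ge i n with hd | hd
        · exact h1 i hd
        · exact h3 i (by omega)
    have key2 : ∀ i, B.parts i < A.parts i → (n ≤ i ∧ i ≤ n') := by
      intro i hi
      by_contra hc
      have := (key i).2 hc
      unfold zpos at this
      omega
    have k1 := key2 m ((hiff m).2 ⟨le_rfl, hmm⟩)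
    have k2 := key2 m' hlt
    have key3 : ∀ i, n ≤ i → i ≤ n' → m ≤ i ∧ i ≤ m' := by
      intro i ha hb
      have h4 : zpos B i ≠ zpos A i := fun he => (key i).1 he ⟨ha, hb⟩
      have h5 := hle i
      rw [← hiff]
      unfold zpos at h4
      omega
    have k3 := key3 n le_rfl hnn
    have k4 := key3 n' hnn le_rfl
    have e1 : n = m := by omega
    have e2 : n' = m' := by omega
    rw [e1, e2]

/-- `C` matches the zeros of `A` with those of `B`, keeping residues and the order within them. -/
def Good (k N : ℕ) (A B : Partition) (C : Equiv.Perm (Fin N)) : Prop :=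
  (∀ i : Fin N, zpos A i ≡ zpos B (C i) [ZMOD k]) ∧
    ∀ i j : Fin N, i < j → zpos A i ≡ zpos A j [ZMOD k] → C i < C j

theorem Good.trans {k N : ℕ} {A B D : Partition} {c C : Equiv.Perm (Fin N)}
    (h1 : Good k N A B c) (h2 : Good k N B D C) : Good k N A D (C * c) := by
  refine ⟨fun i => (h1.1 i).trans (h2.1 _), fun i j hij hr => ?_⟩
  exact h2.2 _ _ (h1.2 i j hij hr) (((h1.1 i).symm.trans hr).trans (h1.1 j))

theorem p_apply_inv {α : Type*} (C : Equiv.Perm α) (i : α) : C (C⁻¹ i) = i :=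
  Equiv.apply_symm_apply C i

theorem p_inv_apply {α : Type*} (C : Equiv.Perm α) (i : α) : C⁻¹ (C i) = i :=
  Equiv.symm_apply_apply C i

theorem good_unique {k N : ℕ} {A B : Partition} {C C' : Equiv.Perm (Fin N)}
    (h : Good k N A B C) (h' : Good k N A B C') : C = C' := by
  have key : ∀ n : ℕ, ∀ i : Fin N, (i : ℕ) = n → C (C'⁻¹ i) = i := by
    intro n
    induction n using Nat.strong_induction_on with
    | _ n ih =>
      intro i hi
      have hlow : ∀ j : Fin N, j < i → C (C'⁻¹ j) = j := fun j hj =>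
        ih j (by rw [← hi]; exact hj) j rfl
      have hinj : ∀ a b : Fin N, C (C'⁻¹ a) = C (C'⁻¹ b) → a = b := fun a b hab =>
        C'⁻¹.injective (C.injective hab)
      have hres : ∀ a : Fin N, zpos B a ≡ zpos B (C (C'⁻¹ a)) [ZMOD k] := by
        intro a
        have e := h'.1 (C'⁻¹ a)
        rw [p_apply_inv] at e
        exact e.symm.trans (h.1 _)
      have hmono : ∀ a b : Fin N, a < b → zpos B a ≡ zpos B b [ZMOD k] →
          C (C'⁻¹ a) < C (C'⁻¹ b) := by
        intro a b hab hr
        have e1 := h'.1 (C'⁻¹ a)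
        have e2 := h'.1 (C'⁻¹ b)
        rw [p_apply_inv] at e1 e2
        have hr' := (e1.trans hr).trans e2.symm
        apply h.2 _ _ _ hr'
        by_contra hc
        rcases lt_or_eq_of_le (not_lt.1 hc) with hc | hc
        · have := h'.2 _ _ hc hr'.symm
          rw [p_apply_inv, p_apply_inv] at this
          exact absurd this (not_lt.2 hab.le)
        · exact hab.ne' (C'⁻¹.injective hc)
      rcases lt_trichotomy (C (C'⁻¹ i)) i with hc | hc | hc
      · exact absurd (hinj _ _ (hlow _ hc)) hc.ne
      · exact hc
      · obtain ⟨j, hj⟩ : ∃ j, C (C'⁻¹ j) = i := ⟨C' (C⁻¹ i), by simp⟩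
        rcases lt_trichotomy j i with hd | hd | hd
        · have := hlow j hd
          rw [hj] at this
          exact absurd this hd.ne'
        · rw [hd] at hj
          exact hj
        · have hr := hres j
          rw [hj] at hr
          have := hmono i j hd hr.symm
          rw [hj] at this
          exact absurd this (not_lt.2 hc.le)
  ext i
  have := key _ (C' i) rfl
  rw [p_inv_apply] at this
  rw [this]

theorem exists_cyc {N m m' : ℕ} (hmm : m ≤ m') (hN : m' < N) :
    ∃ c : Equiv.Perm (Fin N), (∀ i : Fin N, (c i : ℕ) = cycleFun m m' i) ∧
      Equiv.Perm.sign c = (-1) ^ (m' - m) := by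
  have : NeZero N := ⟨by omega⟩
  have hM : m < N := by omega
  refine ⟨(Fin.cycleIcc ⟨m, hM⟩ ⟨m', hN⟩)⁻¹, ?_, ?_⟩
  · intro i
    have hlt : cycleFun m m' i < N := by
      have := i.2
      unfold cycleFun
      split_ifs <;> omega
    have : (Fin.cycleIcc ⟨m, hM⟩ ⟨m', hN⟩)⁻¹ i = ⟨cycleFun m m' i, hlt⟩ := by
      rw [Equiv.Perm.inv_eq_iff_eq]
      by_cases h1 : (i : ℕ) = m
      · have e : (⟨cycleFun m m' i, hlt⟩ : Fin N) = ⟨m', hN⟩ := by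
          ext; simp [cycleFun, h1]
        rw [e, Fin.cycleIcc_of_last (by simpa using hmm)]
        ext; exact h1
      · by_cases h2 : m < i ∧ (i : ℕ) ≤ m'
        · have e : (⟨cycleFun m m' i, hlt⟩ : Fin N) = ⟨i - 1, by omega⟩ := by
            ext; simp [cycleFun, h1, h2]
          rw [e, Fin.cycleIcc_of_ge_of_lt (by rw [Fin.le_def]; simp only; omega)
            (by rw [Fin.lt_def]; simp only; omega)]
          have h3 := i.2
          ext
          rw [Fin.val_add_one_of_lt']
          · simp only; omega
          · simp only; omega
        · have e : (⟨cycleFun m m' i, hlt⟩ : Fin N) = i := by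
            ext; simp [cycleFun, h1, h2]
          rw [e]
          by_cases h3 : (i : ℕ) < m
          · rw [Fin.cycleIcc_of_lt (by rw [Fin.lt_def]; exact h3)]
          · rw [Fin.cycleIcc_of_gt (by rw [Fin.lt_def]; simp only; omega)]
    rw [this]
  · rw [Equiv.Perm.sign_inv, Fin.sign_cycleIcc_of_le (by simpa using hmm)]

theorem good_step {k N m m' : ℕ} {A B : Partition} (h : HookShape A B k m m')
    {c : Equiv.Perm (Fin N)} (hc : ∀ i : Fin N, (c i : ℕ) = cycleFun m m' i) :
    Good k N A B c := by
  obtain ⟨hmm, h1, h2, h3, h4, -⟩ := h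
  constructor
  · intro i
    rw [hc]
    unfold cycleFun
    split_ifs with ha hb
    · rw [h4, ha]
      exact (Int.modEq_sub_modulus_iff.2 rfl)
    · have := h2 (i - 1) (by omega) (by omega)
      rw [Nat.sub_add_cancel (by omega)] at this
      rw [this]
    · rcases Nat.lt_or_ge i m with hd | hd
      · rw [h1 _ hd]
      · rw [h3 _ (by omega)]
  · intro i j hij hr
    rw [Fin.lt_def] at hij ⊢
    rw [hc, hc]
    by_cases hbad : (i : ℕ) = m ∧ (j : ℕ) ≤ m'
    · exfalso
      obtain ⟨hi, hj⟩ := hbad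
      have e := h2 (j - 1) (by omega) (by omega)
      rw [Nat.sub_add_cancel (by omega)] at e
      have l1 := zpos_lt B (show (j : ℕ) - 1 < m' by omega)
      have l2 := zpos_lt A hij
      rw [hi] at l2 hr
      obtain ⟨z, hz⟩ := hr.dvd
      have hk : (0 : ℤ) < k := by omega
      have z1 : z < 0 := by
        by_contra hh
        have : (0 : ℤ) ≤ k * z := mul_nonneg hk.le (not_lt.1 hh)
        omega
      have z2 : -1 < z := by
        by_contra hh
        have : (k : ℤ) * z ≤ k * (-1) := mul_le_mul_of_nonneg_left (not_lt.1 hh) hk.le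
        omega
      omega
    · unfold cycleFun
      split_ifs <;> omega

theorem chain_key (k N : ℕ) : ∀ (r : ℕ) (ch : Fin (r + 1) → Partition),
    (∀ j : Fin r, IsRimHook (ch j.succ) (ch j.castSucc) k) →
    (ch (Fin.last r)).parts N = 0 →
    ∃ C : Equiv.Perm (Fin N), Good k N (ch (Fin.last r)) (ch 0) C ∧
      Equiv.Perm.sign C =
        (-1) ^ (∑ j : Fin r, (rowCount ((ch j.succ).skew (ch j.castSucc)) - 1)) ∧
      ∀ q : Fin (r + 1) → ℕ → ℕ,
        (∀ j : Fin r, StepTrack (ch j.succ) (ch j.castSucc) (q j.succ) (q j.castSucc)) →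
        ∀ (i : ℕ) (h : q (Fin.last r) i < N), q 0 i = C ⟨_, h⟩ := by
  intro r
  induction r with
  | zero =>
    intro ch _ _
    refine ⟨1, ⟨fun i => rfl, fun i j hij _ => hij⟩, by simp, fun q _ i h => rfl⟩
  | succ r ih =>
    intro ch hch hN
    obtain ⟨m, m', hs⟩ := exists_shape (hch (Fin.last r))
    rw [Fin.succ_last] at hs
    have hle := hs.2.2.2.2.2.2.2.2
    have hm'N : m' < N := by
      by_contra hc
      have h1 := (ch (Fin.last (r + 1))).antitone (not_lt.1 hc)
      have h2 := hs.2.2.2.2.2.2.1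
      simp only [Nat.succ_eq_add_one] at h1 h2 hN
      omega
    obtain ⟨C, hC1, hC2, hC3⟩ := ih (fun j => ch j.castSucc) (fun j => hch j.castSucc)
      (by have := hle N; exact Nat.eq_zero_of_le_zero (this.trans hN.le))
    obtain ⟨c, hc1, hc2⟩ := exists_cyc hs.1 hm'N
    refine ⟨C * c, (good_step hs hc1).trans hC1, ?_, ?_⟩
    · rw [Equiv.Perm.sign_mul, hC2, hc2, Fin.sum_univ_castSucc, pow_add, Fin.succ_last,
        hs.2.2.2.2.2.1]
      rfl
    · intro q hq i h
      have ht := hq (Fin.last r)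
      rw [Fin.succ_last] at ht
      have e := track_unique hs ht
      have e' : q (Fin.last r).castSucc i = (c ⟨_, h⟩ : Fin N) := by
        rw [e, hc1]
      have hlt : q (Fin.last r).castSucc i < N := by rw [e']; exact (c _).2
      have := hC3 (fun j => q j.castSucc) (fun j => hq j.castSucc) i hlt
      have e2 : (⟨q (Fin.last r).castSucc i, hlt⟩ : Fin N) = c ⟨_, h⟩ := Fin.ext e'
      rw [e2] at this
      exact this

theorem parts_length (P : Partition) : P.parts P.length = 0 := by
  obtain ⟨N, hN⟩ := P.eventually_zero
  exact Nat.sInf_mem (s := {N | P.parts N = 0}) ⟨N, hN N le_rfl⟩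

theorem tableau_key {k p : ℕ} (hk : 2 ≤ k) {P : Partition} (T : RHT P (List.replicate p k)) :
    ∃ C : Equiv.Perm (Fin P.length), Good k P.length P Partition.empty C ∧
      Equiv.Perm.sign C = (-1) ^ T.height ∧
      ∀ π, IsZeroPerm T π → Equiv.Perm.sign π = Equiv.Perm.sign C := by
  have hl := T.chain_last
  have hz := T.chain_zero
  obtain ⟨C, h1, h2, h3⟩ := chain_key k P.length _ T.chain (by
    intro j
    rcases T.step j with ⟨h, _⟩ | ⟨_, h⟩
    · simp at h
      omega
    · simpa using h) (by rw [hl]; exact parts_length P)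
  rw [hl, hz] at h1
  refine ⟨C, h1, h2, ?_⟩
  rintro π ⟨q, hq1, hq2, hq3⟩
  have e : C * Fin.revPerm * π = Fin.revPerm := by
    ext i
    have hlast := hq1 (π i) (π i).2
    have hi := (π i).2
    have hlt : q (Fin.last _) (π i) < P.length := by rw [hlast]; omega
    have h4 := h3 q hq2 (π i) hlt
    have e2 : (⟨_, hlt⟩ : Fin P.length) = Fin.rev (π i) := by
      ext
      rw [Fin.val_rev]
      simp only [hlast]
      omega
    rw [e2, hq3] at h4
    simp only [Equiv.Perm.mul_apply, Fin.revPerm_apply]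
    rw [← h4, Fin.val_rev]
    omega
  have := congrArg Equiv.Perm.sign e
  rw [Equiv.Perm.sign_mul, Equiv.Perm.sign_mul] at this
  have gen : ∀ a b d : ℤˣ, a * d * b = d → b = a := by decide
  exact gen _ _ _ this

/-- for `λ` with empty `k`-core and `p = |λ|/k`,
`χ^λ_{(k^p)} = sign(π_λ) · |RHT_{(k^p)}^λ|`, where `π_λ` is the common zero
permutation of all rim hook tableaux of shape `λ` and type `(k^p)`. -/
theorem chi_k_pow_p_eq_sign_mul_card (k p : ℕ) (hk : 2 ≤ k) (P : Partition)
    (hcore : IsKCore k P Partition.empty) (hp : P.size = k * p)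
    (T₀ : RHT P (List.replicate p k)) (π : Equiv.Perm (Fin P.length))
    (hπ : IsZeroPerm T₀ π) :
    chiAux P (List.replicate p k) =
      (Equiv.Perm.sign π : ℤ) * (Nat.card (RHT P (List.replicate p k)) : ℤ) := by
  obtain ⟨C, hC1, hC2, hC3⟩ := tableau_key hk T₀
  have hsign := hC3 π hπ
  have hall : ∀ T : RHT P (List.replicate p k),
      (-1 : ℤ) ^ T.height = (Equiv.Perm.sign π : ℤ) := by
    intro T
    obtain ⟨C', hC1', hC2', -⟩ := tableau_key hk T
    rw [hsign, good_unique hC1 hC1', hC2']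
    simp
  unfold chiAux
  simp only [hall]
  rcases finite_or_infinite (RHT P (List.replicate p k)) with hf | hf
  · have := Fintype.ofFinite (RHT P (List.replicate p k))
    rw [finsum_eq_sum_of_fintype, Finset.sum_const, Nat.card_eq_fintype_card, Finset.card_univ,
      nsmul_eq_mul, mul_comm]
  · rw [finsum_of_infinite_support, Nat.card_eq_zero_of_infinite]
    · simp
    · rw [Function.support_const (by simp)]
      exact Set.infinite_univ

end RimHookPaper
end
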